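/- Let Λ = KQ/I be an arbitrary basic finite-dimensional algebra over an algebraically closed field, d a dimension vector, and S any semisimple sequence of dimension vector d (realizable or not). Then Filt S is a Zariski-closed subset of Rep_d(Λ); in particular, the closure of Rep S is contained in Filt S. Consequently, the map Γ_• : Rep_d(Λ) → ℕ, x ↦ Γ(M_x), is upper semicontinuous. -/

import Mathlib

open Finset

/-! # Varieties of representations of a quiver with relations: basic setup -/

/-- The Zariski topology on the affine space `ι → K`: it is generated by the basic open
sets `D(p) = {x | p(x) ≠ 0}`, where `p` ranges over multivariate polynomials. -/
def zariskiTopology (ι K : Type) [CommSemiring K] : TopologicalSpace (ι → K) :=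
  TopologicalSpace.generateFrom
    {U | ∃ p : MvPolynomial ι K, U = {x | MvPolynomial.eval x p ≠ 0}}

/-- A finite quiver `Q`: vertices `Fin n`, arrows `Fin numArrows` with source and
target maps. -/
structure QuiverData where
  n : ℕ
  numArrows : ℕ
  src : Fin numArrows → Fin n
  tgt : Fin numArrows → Fin n

namespace QuiverData

variable (Q : QuiverData) (d : Fin Q.n → ℕ) (K : Type) [Field K]

/-- Index of the coordinates of the affine space of `d`-dimensional representations:
for each arrow `a` a matrix entry index in `Fin (d (tgt a)) × Fin (d (src a))`. -/
abbrev Coords := Σ a : Fin Q.numArrows, Fin (d (Q.tgt a)) × Fin (d (Q.src a))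

/-- The affine space of `d`-dimensional representations of `Q`:
a point `x` assigns to each arrow `a` a `d (tgt a) × d (src a)` matrix over `K`. -/
abbrev RepSpace := Coords Q d → K

/-- `RepSpace` carries the Zariski topology. -/
noncomputable instance instRepTop : TopologicalSpace (RepSpace Q d K) :=
  zariskiTopology (Coords Q d) K

/-- The underlying `K`-vector space `⊕ᵢ K^{dᵢ}` of any `d`-dimensional representation. -/
abbrev Carrier := (Σ i : Fin Q.n, Fin (d i)) → K

/-- The projection onto the component of the `i`-th vertex (action of the primitive
idempotent `eᵢ`). -/
def proj (i : Fin Q.n) : Carrier Q d K →ₗ[K] Carrier Q d K where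
  toFun m := fun jv => if jv.1 = i then m jv else 0
  map_add' u v := by
    funext jv; by_cases h : jv.1 = i <;> simp [h]
  map_smul' c u := by
    funext jv; by_cases h : jv.1 = i <;> simp [h]

/-- The action of the arrow `a` on the carrier space of the representation `x`. -/
noncomputable def arrowMap (x : RepSpace Q d K) (a : Fin Q.numArrows) :
    Carrier Q d K →ₗ[K] Carrier Q d K where
  toFun m := fun jv =>
    if h : jv.1 = Q.tgt a then
      ∑ w : Fin (d (Q.src a)), x ⟨a, (Fin.cast (congrArg d h) jv.2, w)⟩ * m ⟨Q.src a, w⟩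
    else 0
  map_add' u v := by
    funext jv
    by_cases h : jv.1 = Q.tgt a <;> simp [h, mul_add, Finset.sum_add_distrib]
  map_smul' c u := by
    funext jv
    by_cases h : jv.1 = Q.tgt a <;>
      simp [h, Finset.mul_sum, mul_comm, mul_left_comm, mul_assoc]

/-- The action of a word `w = [a_k, …, a_1]` of arrows on the representation `x`
(the arrow `a_1` acts first; non-composable words act as `0`). -/
noncomputable def wordMap (x : RepSpace Q d K) (w : List (Fin Q.numArrows)) :
    Module.End K (Carrier Q d K) :=
  (w.map fun a => (arrowMap Q d K x a : Module.End K (Carrier Q d K))).prod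

/-- The submodule `J^l · M_x` of the module `M_x`: the sum of the images of all words of
arrows of length `l` (for an admissible ideal, the radical acts through the arrows). -/
noncomputable def radPow (x : RepSpace Q d K) (l : ℕ) : Submodule K (Carrier Q d K) :=
  ⨆ w : {w : List (Fin Q.numArrows) // w.length = l},
    LinearMap.range (wordMap Q d K x w.1)

/-- The socle series of `M_x`: `socPow x l = soc_l(M_x)`. -/
noncomputable def socPow (x : RepSpace Q d K) : ℕ → Submodule K (Carrier Q d K)
  | 0 => ⨅ a, LinearMap.ker (arrowMap Q d K x a)
  | (l+1) => ⨅ a, (socPow x l).comap (arrowMap Q d K x a)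

/-- The dimension, at the vertex `i`, of a (vertex-graded) subspace `N`. -/
noncomputable def vdim (N : Submodule K (Carrier Q d K)) (i : Fin Q.n) : ℕ :=
  Module.finrank K (N.map (proj Q d K i))

/-- The radical layering `S(M_x) = (M/JM, JM/J²M, …, J^L M/J^{L+1} M)` of the module `M_x`,
recorded through the dimension vectors of its semisimple layers. -/
noncomputable def radLayering (L : ℕ) (x : RepSpace Q d K) :
    Fin (L+1) → Fin Q.n → ℕ :=
  fun l i => vdim Q d K (radPow Q d K x l) i - vdim Q d K (radPow Q d K x (l+1)) i

/-- The socle layering `S*(M_x) = (soc₀M, soc₁M/soc₀M, …)` of the module `M_x`, recorded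
through the dimension vectors of its semisimple layers. -/
noncomputable def socLayering (L : ℕ) (x : RepSpace Q d K) :
    Fin (L+1) → Fin Q.n → ℕ :=
  fun l i => vdim Q d K (socPow Q d K x l) i -
    (if (l : ℕ) = 0 then 0 else vdim Q d K (socPow Q d K x ((l : ℕ) - 1)) i)

end QuiverData

/-- The dominance order on semisimple sequences (recorded as sequences of dimension
vectors): `dominates S S'` means `S ≤ S'`, i.e. `⊕_{j≤l} S_j ⊆ ⊕_{j≤l} S'_j` for all `l`. -/
def dominates {n L : ℕ} (S S' : Fin (L+1) → Fin n → ℕ) : Prop :=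
  ∀ (l : Fin (L+1)) (i : Fin n),
    ∑ j ∈ Finset.univ.filter (fun j => j ≤ l), S j i ≤
      ∑ j ∈ Finset.univ.filter (fun j => j ≤ l), S' j i

/-- A semisimple sequence has dimension vector `d` if its layers' dimension vectors sum
to `d`. -/
def hasDimVec {n L : ℕ} (S : Fin (L+1) → Fin n → ℕ) (d : Fin n → ℕ) : Prop :=
  ∀ i, ∑ l, S l i = d i

namespace QuiverData

variable (Q : QuiverData) (d : Fin Q.n → ℕ) (K : Type) [Field K]

/-- Evaluation of a formal noncommutative polynomial in the vertices (`Sum.inl`) and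
arrows (`Sum.inr`) of `Q` on the representation `x`; an element of the path algebra `KQ`
is represented by such a polynomial. -/
noncomputable def evalRel (x : RepSpace Q d K) :
    FreeAlgebra K (Fin Q.n ⊕ Fin Q.numArrows) →ₐ[K] Module.End K (Carrier Q d K) :=
  FreeAlgebra.lift K
    (Sum.elim (fun i => (proj Q d K i : Module.End K (Carrier Q d K)))
      (fun a => (arrowMap Q d K x a : Module.End K (Carrier Q d K))))

/-- The affine variety `Rep_d(Λ)` for `Λ = KQ/I`, where the ideal `I` is generated by the
set `R` of relations: the set of points of `RepSpace` annihilating every relation. -/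
def RepVar (R : Set (FreeAlgebra K (Fin Q.n ⊕ Fin Q.numArrows))) :
    Set (RepSpace Q d K) :=
  {x | ∀ r ∈ R, evalRel Q d K x r = 0}

/-- The affine variety `Rep_d(Λ)` for the truncated path algebra
`Λ = KQ/⟨all paths of length L+1⟩`. -/
def TruncRepVar (L : ℕ) : Set (RepSpace Q d K) :=
  {x | ∀ w : List (Fin Q.numArrows), w.length = L + 1 → wordMap Q d K x w = 0}

/-- A submodule of `M_x`, i.e. a subspace stable under the arrows and the vertex
idempotents. -/
def Stable (x : RepSpace Q d K) (N : Submodule K (Carrier Q d K)) : Prop :=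
  (∀ a, N.map (arrowMap Q d K x a) ≤ N) ∧ ∀ i, N.map (proj Q d K i) ≤ N

/-- A submodule `N` of `M_x` is indecomposable (as a module). -/
def IndecompSub (x : RepSpace Q d K) (N : Submodule K (Carrier Q d K)) : Prop :=
  N ≠ ⊥ ∧ ∀ N₁ N₂ : Submodule K (Carrier Q d K),
    Stable Q d K x N₁ → Stable Q d K x N₂ → N₁ ≤ N → N₂ ≤ N →
    N₁ ⊔ N₂ = N → N₁ ⊓ N₂ = ⊥ → N₁ = ⊥ ∨ N₂ = ⊥

/-- The module `M_x` is indecomposable. -/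
def IndecompRep (x : RepSpace Q d K) : Prop :=
  IndecompSub Q d K x ⊤

/-- The module `M_x` is uniserial: its submodules form a chain. -/
def UniserialRep (x : RepSpace Q d K) : Prop :=
  ∀ N₁ N₂ : Submodule K (Carrier Q d K),
    Stable Q d K x N₁ → Stable Q d K x N₂ → N₁ ≤ N₂ ∨ N₂ ≤ N₁

/-- `M_x` decomposes as a direct sum of `s` indecomposable submodules whose dimension
vectors are `D 0, …, D (s-1)`. -/
def DecompWith (x : RepSpace Q d K) (s : ℕ) (D : Fin s → Fin Q.n → ℕ) : Prop :=
  ∃ N : Fin s → Submodule K (Carrier Q d K),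
    (∀ r, Stable Q d K x (N r)) ∧
    (∀ r, Disjoint (N r) (⨆ t, ⨆ (_ : t ≠ r), N t)) ∧
    (⨆ r, N r) = ⊤ ∧
    (∀ r, IndecompSub Q d K x (N r)) ∧
    ∀ r i, vdim Q d K (N r) i = D r i

/-- A homomorphism of representations `M_x → M_y` (for possibly different dimension
vectors): a linear map commuting with the arrow actions and the vertex projections. -/
def RepHom (dx dy : Fin Q.n → ℕ) (x : RepSpace Q dx K) (y : RepSpace Q dy K)
    (φ : Carrier Q dx K →ₗ[K] Carrier Q dy K) : Prop :=
  (∀ a, φ ∘ₗ arrowMap Q dx K x a = arrowMap Q dy K y a ∘ₗ φ) ∧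
  ∀ i, φ ∘ₗ proj Q dx K i = proj Q dy K i ∘ₗ φ

/-- The submodule `N` of `M_x` is isomorphic, as a representation, to `M_y`. -/
def SubrepIso (dy : Fin Q.n → ℕ) (x : RepSpace Q d K)
    (N : Submodule K (Carrier Q d K)) (y : RepSpace Q dy K) : Prop :=
  ∃ φ : Carrier Q d K →ₗ[K] Carrier Q dy K,
    N ⊓ LinearMap.ker φ = ⊥ ∧ N.map φ = ⊤ ∧
    (∀ a, ∀ m ∈ N, φ (arrowMap Q d K x a m) = arrowMap Q dy K y a (φ m)) ∧
    (∀ i, ∀ m ∈ N, φ (proj Q d K i m) = proj Q dy K i (φ m))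

/-- The representations `M_x` and `M_y` are isomorphic; the isomorphism classes are
exactly the orbits of the `GL(d)`-action. -/
def IsoRep (x y : RepSpace Q d K) : Prop :=
  ∃ φ : Carrier Q d K ≃ₗ[K] Carrier Q d K,
    (∀ a m, φ (arrowMap Q d K x a m) = arrowMap Q d K y a (φ m)) ∧
    ∀ i m, φ (proj Q d K i m) = proj Q d K i (φ m)

/-- The `GL(d)`-orbit of the point `x`, i.e. the set of points encoding modules
isomorphic to `M_x`. -/
def orbitSet (x : RepSpace Q d K) : Set (RepSpace Q d K) :=
  {y | IsoRep Q d K x y}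

/-- Given a family `P` of varieties `Rep_dv(Λ)` (one for every dimension vector `dv`),
`Ext¹_Λ(M_x, M_y) = 0`: every extension `0 → M_y → E → M_x → 0` of `Λ`-modules splits. -/
def Ext1Zero (P : ∀ dv : Fin Q.n → ℕ, Set (RepSpace Q dv K))
    (dx dy : Fin Q.n → ℕ) (x : RepSpace Q dx K) (y : RepSpace Q dy K) : Prop :=
  ∀ z ∈ P (fun i => dx i + dy i),
    ∀ (ι : Carrier Q dy K →ₗ[K] Carrier Q (fun i => dx i + dy i) K)
      (π : Carrier Q (fun i => dx i + dy i) K →ₗ[K] Carrier Q dx K),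
      RepHom Q K dy (fun i => dx i + dy i) y z ι →
      RepHom Q K (fun i => dx i + dy i) dx z x π →
      Function.Injective ι → Function.Surjective π →
      LinearMap.ker π = LinearMap.range ι →
      ∃ σ : Carrier Q dx K →ₗ[K] Carrier Q (fun i => dx i + dy i) K,
        RepHom Q K dx (fun i => dx i + dy i) x z σ ∧ π ∘ₗ σ = LinearMap.id

/-- The direct sum `C₁ ⊕ ⋯ ⊕ C_s` of subvarieties `C_r ⊆ Rep_{D r}(Λ)`: the set of
points `x ∈ Rep_d(Λ)` whose module decomposes as `M_x ≅ ⊕_r M^{(r)}` with `M^{(r)}`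
encoded by a point of `C_r`. -/
def DirectSumSet (s : ℕ) (D : Fin s → Fin Q.n → ℕ)
    (Cs : ∀ r : Fin s, Set (RepSpace Q (D r) K)) : Set (RepSpace Q d K) :=
  {x | ∃ N : Fin s → Submodule K (Carrier Q d K),
    (∀ r, Stable Q d K x (N r)) ∧
    (∀ r, Disjoint (N r) (⨆ t, ⨆ (_ : t ≠ r), N t)) ∧
    (⨆ r, N r) = ⊤ ∧
    ∀ r, ∃ y ∈ Cs r, SubrepIso Q d K (D r) x (N r) y}

/-- The endomorphism space `End_Λ(M_x)` of the module `M_x`. -/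
def endSpace (x : RepSpace Q d K) :
    Submodule K (Carrier Q d K →ₗ[K] Carrier Q d K) where
  carrier := {φ | RepHom Q K d d x x φ}
  add_mem' := by
    intro φ ψ hφ hψ
    exact ⟨fun a => by rw [LinearMap.add_comp, LinearMap.comp_add, hφ.1 a, hψ.1 a],
      fun i => by rw [LinearMap.add_comp, LinearMap.comp_add, hφ.2 i, hψ.2 i]⟩
  zero_mem' := by
    exact ⟨fun a => by simp, fun i => by simp⟩
  smul_mem' := by
    intro c φ hφ
    exact ⟨fun a => by rw [LinearMap.smul_comp, LinearMap.comp_smul, hφ.1 a],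
      fun i => by rw [LinearMap.smul_comp, LinearMap.comp_smul, hφ.2 i]⟩

/-- A word of arrows is a (composable) path when read in function-composition order. -/
def IsPathWord (w : List (Fin Q.numArrows)) : Prop :=
  List.Chain' (fun a b => Q.src a = Q.tgt b) w

/-- The quiver `Q` has no oriented cycles. -/
def Acyclic : Prop :=
  ∀ (a : Fin Q.numArrows) (w : List (Fin Q.numArrows)),
    IsPathWord Q (a :: w) →
      Q.tgt a ≠ Q.src ((a :: w).getLast (List.cons_ne_nil a w))

/-- A filtration `M_x = F 0 ⊇ F 1 ⊇ ⋯ ⊇ F (L+1) = 0` by submodules which is governed by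
the semisimple sequence `S`: each layer `F l / F (l+1)` is semisimple, isomorphic to `S l`. -/
def Governed (L : ℕ) (x : RepSpace Q d K) (S : Fin (L+1) → Fin Q.n → ℕ)
    (F : Fin (L+2) → Submodule K (Carrier Q d K)) : Prop :=
  F 0 = ⊤ ∧ F (Fin.last (L+1)) = ⊥ ∧
  (∀ l : Fin (L+1), F l.succ ≤ F l.castSucc) ∧
  (∀ (l : Fin (L+2)) (i : Fin Q.n), (F l).map (proj Q d K i) ≤ F l) ∧
  (∀ (l : Fin (L+1)) (a : Fin Q.numArrows),
      (F l.castSucc).map (arrowMap Q d K x a) ≤ F l.succ) ∧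
  ∀ (l : Fin (L+1)) (i : Fin Q.n),
      vdim Q d K (F l.castSucc) i = S l i + vdim Q d K (F l.succ) i

/-- `Filt S`: the set of points whose module has a filtration governed by `S`. -/
def FiltSet (L : ℕ) (S : Fin (L+1) → Fin Q.n → ℕ) : Set (RepSpace Q d K) :=
  {x | ∃ F, Governed Q d K L x S F}

/-- `Γ(M_x)`: the number of semisimple sequences which are realizable (i.e. occur as the
radical layering of a module in the variety `P`) and which govern some filtration of `M_x`. -/
noncomputable def gammaCount (L : ℕ) (P : Set (RepSpace Q d K))
    (x : RepSpace Q d K) : ℕ :=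
  Set.ncard {S : Fin (L+1) → Fin Q.n → ℕ |
    (∃ y ∈ P, radLayering Q d K L y = S) ∧ ∃ F, Governed Q d K L x S F}

/-- `Sstar` is the generic (= minimal, attained) socle layering of the modules in `W`. -/
def GenSoc (L : ℕ) (W : Set (RepSpace Q d K))
    (Sstar : Fin (L+1) → Fin Q.n → ℕ) : Prop :=
  (∀ x ∈ W, dominates Sstar (socLayering Q d K L x)) ∧
  ∃ x ∈ W, socLayering Q d K L x = Sstar

end QuiverData

namespace QuiverData

variable (Q : QuiverData)

/-- The `i`-th entry of the row vector `e·A` (over `ℤ`), where `A` is the adjacency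
matrix of `Q`: the sum of `e (src a)` over all arrows `a` ending at `i`. -/
def inflowZ (e : Fin Q.n → ℤ) (i : Fin Q.n) : ℤ :=
  ∑ a ∈ Finset.univ.filter (fun a => Q.tgt a = i), e (Q.src a)

/-- The `i`-th entry of the row vector `e·B` (over `ℤ`), where `B` is the transpose of
the adjacency matrix of `Q`. -/
def outflowZ (e : Fin Q.n → ℤ) (i : Fin Q.n) : ℤ :=
  ∑ a ∈ Finset.univ.filter (fun a => Q.src a = i), e (Q.tgt a)

/-- Partial sums `t⁽⁰⁾ + ⋯ + t⁽ˡ⁾` of the recursion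
`t⁽⁰⁾ = sup{0, d − d·A}`, `t⁽ˡ⁺¹⁾ = sup{0, (d − ∑_{k≤l} t⁽ᵏ⁾) − (d − ∑_{k≤l} t⁽ᵏ⁾)·A}`
(computed componentwise). -/
def cumLayer (dz : Fin Q.n → ℤ) : ℕ → Fin Q.n → ℤ
  | 0 => fun i => max 0 (dz i - inflowZ Q dz i)
  | (l+1) => fun i =>
      cumLayer dz l i +
        max 0 ((dz i - cumLayer dz l i) -
          inflowZ Q (fun j => dz j - cumLayer dz l j) i)

/-- The positive part `∑ᵢ eᵢ fᵢ` of the Euler form of `Q`. -/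
def eulerHomPart (e f : Fin Q.n → ℕ) : ℕ := ∑ i, e i * f i

/-- The negative part `∑_{α} e_{src α} f_{tgt α}` of the Euler form of `Q`, so that
`⟨e, f⟩ = eulerHomPart e f − eulerExtPart e f`. -/
def eulerExtPart (e f : Fin Q.n → ℕ) : ℕ :=
  ∑ a, e (Q.src a) * f (Q.tgt a)

end QuiverData

/-- The quiver with a single vertex and `r` loops. -/
def QuiverData.loopQuiver (r : ℕ) : QuiverData :=
  ⟨1, r, fun _ => 0, fun _ => 0⟩

namespace QuiverData

variable (Q : QuiverData) (d : Fin Q.n → ℕ) (K : Type) [Field K]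

/-- The variety `Rep_d(Λ)` for `Λ = KQ/⟨Rels⟩`, regarded as a topological space with the
(subspace) Zariski topology. -/
abbrev GenV (Rels : Set (FreeAlgebra K (Fin Q.n ⊕ Fin Q.numArrows))) :=
  {y : RepSpace Q d K // y ∈ RepVar Q d K Rels}

/-- The variety `Rep_d(Λ)` for the truncated path algebra
`Λ = KQ/⟨paths of length L+1⟩`, regarded as a topological space. -/
abbrev TruncV (L : ℕ) := {y : RepSpace Q d K // y ∈ TruncRepVar Q d K L}

end QuiverData

/-!
`Filt S` is the image, under a coordinate projection, of the closed variety of pairs `(x, y)` where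
`y` is a frame adapted to `x`: a basis at each vertex, split into layers of the sizes prescribed by
`S`, in which every arrow of `x` strictly lowers the layers. Such an image is closed as soon as, for
every valuation ring `V` of an extension field `F`, an adapted frame over `F` of a `V`-integral
representation can be replaced by one which, together with its inverse, has entries in `V`. This is
the completeness of flag varieties: a flag of `Fⁿ` cuts the lattice `Vⁿ` in finitely generated
torsion-free, hence free, submodules with torsion-free quotients, so `Vⁿ` has a `V`-basis adapted to
the flag.

The radical filtration of a module is governed by its radical layering, whence `Rep S ⊆ Filt S`. As
only finitely many sequences have dimension vector `d`, the sets `{Γ ≥ m}` are finite unions of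
finite intersections of closed sets.
-/

section ValuativeCriterion

universe u

open MvPolynomial
open scoped Topology

theorem isClosed_zeroLocus {ι K : Type} [Field K] (I : Ideal (MvPolynomial ι K)) :
    IsClosed[zariskiTopology ι K] (zeroLocus K I) := by
  let _ := zariskiTopology ι K
  have basic (p : MvPolynomial ι K) : IsClosed {x : ι → K | eval x p = 0} :=
    ⟨TopologicalSpace.isOpen_generateFrom_of_mem ⟨p, rfl⟩⟩
  have eq_iInter : zeroLocus K I = ⋂ p ∈ I, {x | eval x p = 0} := by
    ext x
    simp only [mem_zeroLocus_iff, ← coe_aeval_eq_eval, Set.mem_iInter, Set.mem_ofPred_eq,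
      RingHom.coe_coe]
  rw [eq_iInter]
  exact isClosed_biInter fun p _ => basic p

theorem exists_field_valuationSubring_of_comap_le {A : Type*} {B : Type u} [CommRing A] [CommRing B]
    (φ : A →+* B) (I : Ideal B) (𝔪 : Ideal A) [𝔪.IsPrime] (h : I.comap φ ≤ 𝔪) :
    ∃ (F : Type u) (_ : Field F) (g : B →+* F) (V : ValuationSubring F),
      I ≤ RingHom.ker g ∧ (∀ a, g (φ a) ∈ V) ∧ ∀ a ∈ 𝔪, V.valuation (g (φ a)) < 1 := by
  obtain ⟨𝔮, _, hI𝔮, h𝔮⟩ := Ideal.exists_le_prime_disjoint I (𝔪.primeCompl.map φ) <| by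
    rw [Set.disjoint_left]
    rintro _ hb ⟨a, ha, rfl⟩
    exact ha (h hb)
  let g : B →+* 𝔮.ResidueField := algebraMap B 𝔮.ResidueField
  have isUnit_of_notMem (a : 𝔪.primeCompl) : IsUnit ((g.comp φ) a) := by
    rw [isUnit_iff_ne_zero, RingHom.comp_apply, Ne, Ideal.algebraMap_residueField_eq_zero]
    exact fun ha => Set.disjoint_left.mp h𝔮 ha ⟨a, a.2, rfl⟩
  let f : Localization.AtPrime 𝔪 →+* 𝔮.ResidueField := IsLocalization.lift isUnit_of_notMem
  have f_algebraMap (a : A) : f (algebraMap A _ a) = g (φ a) := IsLocalization.lift_eq _ a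
  obtain ⟨V, hV, hlocal⟩ := IsLocalRing.exists_factor_valuationRing f
  refine ⟨𝔮.ResidueField, inferInstance, g, V, fun b hb => ?_, fun a => ?_, fun a ha => ?_⟩
  · exact Ideal.algebraMap_residueField_eq_zero.mpr (hI𝔮 hb)
  · exact f_algebraMap a ▸ hV _
  · have hnonunit : algebraMap A (Localization.AtPrime 𝔪) a ∈ nonunits _ := by
      rw [← IsLocalRing.mem_maximalIdeal]
      exact (IsLocalization.AtPrime.to_map_mem_maximal_iff _ 𝔪 a).mpr ha
    rw [← f_algebraMap]
    exact (V.valuation_lt_one_iff ⟨_, hV _⟩).mp (mt (hlocal.map_nonunit _) hnonunit)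

theorem exists_mem_zeroLocus_comp_inl_eq {ι κ K : Type*} [Field K] [IsAlgClosed K] [Finite ι]
    [Finite κ] (I : Ideal (MvPolynomial (ι ⊕ κ) K)) (hI : I ≠ ⊤) (x : ι → K)
    (h : ∀ i, X (Sum.inl i) - C (x i) ∈ I) : ∃ z ∈ zeroLocus K I, z ∘ Sum.inl = x := by
  obtain ⟨𝔐, h𝔐, hI𝔐⟩ := I.exists_le_maximal hI
  obtain ⟨z, rfl⟩ := isMaximal_iff_eq_vanishingIdeal_singleton.mp h𝔐
  have hz (p : MvPolynomial (ι ⊕ κ) K) (hp : p ∈ I) : aeval z p = 0 :=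
    (mem_vanishingIdeal_singleton_iff z p).mp (hI𝔐 hp)
  refine ⟨z, hz, funext fun i => ?_⟩
  simpa [sub_eq_zero] using hz _ (h i)

theorem exists_mem_zeroLocus_comp_inl_eq_of_valuation_lt_one {ι κ K F : Type*} [Field K]
    [IsAlgClosed K] [Finite ι] [Finite κ] [Field F] [Algebra K F]
    (I : Ideal (MvPolynomial (ι ⊕ κ) K)) (V : ValuationSubring F)
    (algebraMap_mem : ∀ c, algebraMap K F c ∈ V) {z : ι ⊕ κ → F} (hz : z ∈ zeroLocus F I)
    (hzV : ∀ j, z j ∈ V) (x : ι → K)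
    (hx : ∀ i, V.valuation (z (Sum.inl i) - algebraMap K F (x i)) < 1) :
    ∃ y ∈ zeroLocus K I, y ∘ Sum.inl = x := by
  let ev : MvPolynomial (ι ⊕ κ) K →+* V :=
    eval₂Hom ((algebraMap K F).codRestrict V.toSubring algebraMap_mem) fun j => ⟨z j, hzV j⟩
  have ev_eq (p : MvPolynomial (ι ⊕ κ) K) : (ev p : F) = aeval z p :=
    eval₂_comp_left V.subtype _ _ p
  let J : Ideal (MvPolynomial (ι ⊕ κ) K) := RingHom.ker ((IsLocalRing.residue V).comp ev)
  have I_le_J : I ≤ J := fun p hp => by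
    have ev_eq_zero : ev p = 0 := Subtype.ext ((ev_eq p).trans (hz p hp))
    rw [RingHom.mem_ker, RingHom.comp_apply, ev_eq_zero, map_zero]
  obtain ⟨y, hy, hyx⟩ := exists_mem_zeroLocus_comp_inl_eq J (RingHom.ker_ne_top _) x fun i => by
    rw [RingHom.mem_ker, RingHom.comp_apply, IsLocalRing.residue_eq_zero_iff,
      V.valuation_lt_one_iff, ev_eq, map_sub, aeval_X, aeval_C]
    exact hx i
  exact ⟨y, zeroLocus_anti_mono I_le_J hy, hyx⟩

/-- A valuative criterion: the hypothesis says that a point of the variety over `F` whose image is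
`V`-integral can be replaced by a `V`-integral point with the same image, which then specializes
to the residue field of `V`. -/
theorem isClosed_image_comp_inl_zeroLocus {ι κ K : Type} [Field K] [IsAlgClosed K] [Finite ι]
    [Finite κ] (I : Ideal (MvPolynomial (ι ⊕ κ) K))
    (exists_integral : ∀ (F : Type) [Field F] [Algebra K F] (V : ValuationSubring F),
      (∀ c, algebraMap K F c ∈ V) → ∀ z ∈ zeroLocus F I, (∀ i, z (Sum.inl i) ∈ V) →
      ∃ z' ∈ zeroLocus F I, z' ∘ Sum.inl = z ∘ Sum.inl ∧ ∀ j, z' j ∈ V) :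
    IsClosed[zariskiTopology ι K] ((· ∘ Sum.inl) '' zeroLocus K I) := by
  suffices (· ∘ Sum.inl) '' zeroLocus K I =
      zeroLocus K (I.comap (rename Sum.inl : MvPolynomial ι K →ₐ[K] _)) by
    rw [this]
    exact isClosed_zeroLocus _
  refine Set.Subset.antisymm ?_ fun x hx => ?_
  · rintro _ ⟨z, hz, rfl⟩ p hp
    simpa only [aeval_rename] using hz _ hp
  obtain ⟨F, _, g, V, hIg, hV, hlt⟩ := exists_field_valuationSubring_of_comap_le
    (rename Sum.inl : MvPolynomial ι K →ₐ[K] MvPolynomial (ι ⊕ κ) K).toRingHom I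
    (vanishingIdeal K {x}) fun p hp => (mem_vanishingIdeal_singleton_iff x p).mpr (hx p hp)
  let _ : Algebra K F := (g.comp C).toAlgebra
  have algebraMap_mem (c : K) : algebraMap K F c ∈ V := by
    simpa [RingHom.algebraMap_toAlgebra] using hV (C c)
  have g_eq_aeval (p : MvPolynomial (ι ⊕ κ) K) : g p = aeval (g ∘ X) p :=
    DFunLike.congr_fun (aeval_unique ({ g with commutes' := fun _ => rfl } : _ →ₐ[K] F)) p
  obtain ⟨z, hzI, hz, hzV⟩ := exists_integral F V algebraMap_mem (g ∘ X)
    (fun p hp => g_eq_aeval p ▸ hIg hp) (fun i => by simpa using hV (X i))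
  refine exists_mem_zeroLocus_comp_inl_eq_of_valuation_lt_one I V algebraMap_mem hzI hzV x
    fun i => ?_
  have g_eq : g (rename Sum.inl (X i - C (x i) : MvPolynomial ι K)) =
      z (Sum.inl i) - algebraMap K F (x i) := by
    rw [map_sub, map_sub, rename_X, rename_C]
    exact congr_arg (· - _) (congr_fun hz i).symm
  exact g_eq ▸ hlt _ (by simp)

end ValuativeCriterion

section Flags

open Module

variable {k : ℕ} {s : Fin k → ℕ}

/-- A descending flag `⊤ = W 0 ≥ W 1 ≥ ⋯ ≥ W k = ⊥` of subspaces whose `l`-th layer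
`W l / W (l + 1)` has dimension `s l`. -/
structure IsFlag {F U : Type*} [Field F] [AddCommGroup U] [Module F U]
    (W : Fin (k + 1) → Submodule F U) (s : Fin k → ℕ) : Prop where
  zero_eq_top : W 0 = ⊤
  last_eq_bot : W (Fin.last k) = ⊥
  succ_le (l : Fin k) : W l.succ ≤ W l.castSucc
  finrank_castSucc (l : Fin k) : finrank F (W l.castSucc) = s l + finrank F (W l.succ)

/-- The span of the members of a basis that lie in the layers of index at least `l`. -/
def levelSpan {F U : Type*} [Field F] [AddCommGroup U] [Module F U]
    (b : Basis (Σ l, Fin (s l)) F U) (l : Fin (k + 1)) : Submodule F U :=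
  Submodule.span F (b '' {v | l ≤ v.1.castSucc})

theorem apply_zero_eq_sum_add_apply_last {N : Type*} [AddCommMonoid N] {f : Fin (k + 1) → N}
    {g : Fin k → N} (h : ∀ l, f l.castSucc = g l + f l.succ) :
    f 0 = ∑ l, g l + f (Fin.last k) := by
  induction k with
  | zero => simp
  | succ k ih =>
    rw [← Fin.castSucc_zero, h, Fin.sum_univ_succ, add_assoc, ← Fin.succ_last]
    exact congr_arg _ (ih (f := fun l => f l.succ) fun l => h l.succ)

section Field

variable {F U : Type*} [Field F] [AddCommGroup U] [Module F U]

namespace IsFlag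

variable {W : Fin (k + 1) → Submodule F U}

theorem antitone (hW : IsFlag W s) : Antitone W :=
  Fin.antitone_iff_succ_le.mpr hW.succ_le

theorem sum_eq_finrank (hW : IsFlag W s) : ∑ l, s l = finrank F U := by
  rw [← finrank_top F U, ← hW.zero_eq_top,
    apply_zero_eq_sum_add_apply_last (f := fun l => finrank F (W l)) hW.finrank_castSucc,
    hW.last_eq_bot, finrank_bot, add_zero]

end IsFlag

theorem mem_levelSpan {b : Basis (Σ l, Fin (s l)) F U} {l : Fin (k + 1)} {u : U} :
    u ∈ levelSpan b l ↔ ∀ v, v.1.castSucc < l → b.repr u v = 0 := by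
  rw [levelSpan, Basis.mem_span_image]
  simp only [Set.subset_def, Finset.mem_coe, Finsupp.mem_support_iff, Set.mem_ofPred_eq]
  exact forall_congr' fun v => by rw [← not_lt, not_imp_not]

theorem levelSpan_le_iff {b : Basis (Σ l, Fin (s l)) F U} {l : Fin (k + 1)} {N : Submodule F U} :
    levelSpan b l ≤ N ↔ ∀ v, l ≤ v.1.castSucc → b v ∈ N := by
  rw [levelSpan, Submodule.span_le, Set.image_subset_iff]
  rfl

theorem finrank_levelSpan (b : Basis (Σ l, Fin (s l)) F U) (l : Fin (k + 1)) :
    finrank F (levelSpan b l) = #{v : Σ l, Fin (s l) | l ≤ v.1.castSucc} := by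
  have li : LinearIndependent F fun v : {v : Σ l, Fin (s l) // l ≤ v.1.castSucc} => b v :=
    b.linearIndependent.comp _ Subtype.val_injective
  have range_eq : (Set.range fun v : {v : Σ l, Fin (s l) // l ≤ v.1.castSucc} => b v) =
      b '' {v | l ≤ v.1.castSucc} := by
    rw [Set.image_eq_range]; rfl
  rw [levelSpan, ← range_eq, finrank_span_eq_card li, Fintype.card_subtype]

theorem isFlag_levelSpan (b : Basis (Σ l, Fin (s l)) F U) : IsFlag (levelSpan b) s where
  zero_eq_top := by simp [levelSpan]
  last_eq_bot := by simp [levelSpan, (Fin.castSucc_lt_last _).not_ge]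
  succ_le l := Submodule.span_mono <| Set.image_mono fun v hv =>
    (Fin.castSucc_lt_succ.le.trans hv : l.castSucc ≤ v.1.castSucc)
  finrank_castSucc l := by
    have split : ({v | l.castSucc ≤ v.1.castSucc} : Finset (Σ l, Fin (s l))) =
        (univ : Finset (Fin (s l))).map (Function.Embedding.sigmaMk l) ∪
          ({v | l.succ ≤ v.1.castSucc} : Finset (Σ l, Fin (s l))) := by
      ext v
      simp only [mem_filter, mem_univ, true_and, mem_union, mem_map, Fin.succ_le_castSucc_iff,
        Fin.castSucc_le_castSucc_iff]
      rw [le_iff_eq_or_lt]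
      refine or_congr_left ⟨?_, ?_⟩
      · rintro rfl
        exact ⟨v.2, rfl⟩
      · rintro ⟨j, rfl⟩
        rfl
    have disjoint : Disjoint ((univ : Finset (Fin (s l))).map (Function.Embedding.sigmaMk l))
        ({v | l.succ ≤ v.1.castSucc} : Finset (Σ l, Fin (s l))) := by
      simp [Finset.disjoint_left, Fin.succ_le_castSucc_iff]
    rw [finrank_levelSpan, finrank_levelSpan, split, Finset.card_union_of_disjoint disjoint,
      card_map, card_univ, Fintype.card_fin]

end Field

section Lattice

theorem finiteDimensional_of_isLattice {V F U : Type*} [CommRing V] [Field F] [Algebra V F]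
    [AddCommGroup U] [Module V U] [Module F U] [IsScalarTower V F U] (M : Submodule V U)
    [Submodule.IsLattice F M] : FiniteDimensional F U := by
  obtain ⟨t, ht⟩ := Submodule.IsLattice.fg (A := F) (M := M)
  exact ⟨t, by rw [← Submodule.span_span_of_tower V, ht, Submodule.IsLattice.span_eq_top]⟩

variable {V F U : Type*} [CommRing V] [Field F] [Algebra V F]
  [IsFractionRing V F] [AddCommGroup U] [Module V U] [Module F U] [IsScalarTower V F U]

theorem span_inf_restrictScalars (M : Submodule V U) [Submodule.IsLattice F M]
    (W : Submodule F U) :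
    Submodule.span F (M ⊓ W.restrictScalars V : Set U) = W := by
  refine le_antisymm (Submodule.span_le.mpr fun u hu => hu.2) fun u hu => ?_
  have hu_span : u ∈ Submodule.span F (M : Set U) :=
    Submodule.IsLattice.span_eq_top (A := F) (M := M) ▸ Submodule.mem_top
  obtain ⟨y, hy, r, rfl⟩ := (IsLocalization.mem_span_iff (nonZeroDivisors V)).mp hu_span
  rw [Submodule.span_eq] at hy
  have algebraMap_ne_zero : algebraMap V F r ≠ 0 := (IsLocalization.map_units F r).ne_zero
  have hyW : y ∈ W := by
    simpa [← algebraMap_smul F (r : V), smul_smul, algebraMap_ne_zero] using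
      W.smul_mem (algebraMap V F r) hu
  exact Submodule.smul_mem _ _ (Submodule.subset_span ⟨hy, hyW⟩)

variable [IsDomain V] [ValuationRing V]

theorem free_of_isTorsionFree (M : Type*) [AddCommGroup M] [Module V M] [Module.Finite V M]
    [Module.IsTorsionFree V M] : Module.Free V M :=
  have : Module.Flat V M := Module.Flat.flat_iff_torsion_eq_bot_of_isBezout.mpr
    (Submodule.isTorsionFree_iff_torsion_eq_bot.mp inferInstance)
  Module.free_of_flat_of_isLocalRing

variable (F) in
theorem nonempty_basis_fin_finrank_span {P : Submodule V U} (hP : P.FG) :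
    Nonempty (Basis (Fin (finrank F (Submodule.span F (P : Set U)))) V P) := by
  have : Module.Finite V P := Module.Finite.iff_fg.mpr hP
  have : Module.IsTorsionFree V U := Module.IsTorsionFree.trans_faithfulSMul V F U
  have : Module.Free V P := free_of_isTorsionFree P
  let b := Module.Free.chooseBasis V P
  have li : LinearIndependent F fun i => (b i : U) :=
    (LinearIndependent.iff_fractionRing V F).mp
      (b.linearIndependent.map' P.subtype P.ker_subtype)
  have span_eq : Submodule.span F (Set.range fun i => (b i : U)) = Submodule.span F P := by
    rw [← Submodule.span_span_of_tower V]
    congr 2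
    rw [show (fun i => (b i : U)) = P.subtype ∘ b from rfl, Set.range_comp,
      ← Submodule.map_span, b.span_eq, Submodule.map_top, P.range_subtype]
  refine ⟨b.reindex (Fintype.equivFinOfCardEq ?_)⟩
  rw [← span_eq, finrank_span_eq_card li]

variable (M : Submodule V U) [Submodule.IsLattice F M]

theorem fg_inf_restrictScalars (W : Submodule F U) : (M ⊓ W.restrictScalars V).FG := by
  let π : M →ₗ[V] U ⧸ W := (W.mkQ.restrictScalars V).domRestrict M
  have : Module.Finite V M := Submodule.IsLattice.finite F M
  have : Module.IsTorsionFree V (U ⧸ W) := Module.IsTorsionFree.trans_faithfulSMul V F _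
  have : Module.Free V (LinearMap.range π) := free_of_isTorsionFree _
  have : Module.FinitePresentation V (LinearMap.range π) :=
    Module.finitePresentation_of_projective V _
  have ker_fg : (LinearMap.ker π.rangeRestrict).FG :=
    Module.FinitePresentation.fg_ker _ π.surjective_rangeRestrict
  convert ker_fg.map M.subtype using 1
  ext u
  simp [π, and_comm]

theorem exists_lattice_layer_generators {W W' : Submodule F U}
    (h : W' ≤ W) {m : ℕ} (hm : finrank F W = m + finrank F W') :
    ∃ c : Fin m → U, (∀ j, c j ∈ M ⊓ W.restrictScalars V) ∧
      M ⊓ W.restrictScalars V ≤ Submodule.span V (Set.range c) ⊔ M ⊓ W'.restrictScalars V := by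
  let π : U →ₗ[V] U ⧸ W' := W'.mkQ.restrictScalars V
  let P := (M ⊓ W.restrictScalars V).map π
  have span_eq : Submodule.span F (P : Set (U ⧸ W')) = W.map W'.mkQ := by
    conv_rhs => rw [← span_inf_restrictScalars M W, Submodule.map_span]
    rfl
  have finrank_eq : finrank F (Submodule.span F (P : Set (U ⧸ W'))) = m := by
    have : FiniteDimensional F U := finiteDimensional_of_isLattice M
    have rank_nullity := (W'.mkQ.domRestrict W).finrank_range_add_finrank_ker
    rw [LinearMap.range_domRestrict, LinearMap.ker_domRestrict, Submodule.ker_mkQ, hm,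
      (Submodule.comapSubtypeEquivOfLe h).finrank_eq] at rank_nullity
    rw [span_eq]
    exact Nat.add_right_cancel rank_nullity
  obtain ⟨b⟩ := nonempty_basis_fin_finrank_span F ((fg_inf_restrictScalars M W).map π)
  rw [finrank_eq] at b
  choose c hc hcb using fun j => (b j).2
  refine ⟨c, hc, fun u hu => ?_⟩
  let r := b.repr ⟨π u, Submodule.mem_map_of_mem hu⟩
  have π_sum : π (∑ j, r j • c j) = π u := by
    have := congr_arg Subtype.val (b.sum_repr ⟨π u, Submodule.mem_map_of_mem hu⟩)
    simp_rw [map_sum, map_smul, hcb]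
    rw [AddSubmonoidClass.coe_finsetSum] at this
    exact this
  have sum_mem : ∑ j, r j • c j ∈ M ⊓ W.restrictScalars V :=
    Submodule.sum_mem _ fun j _ => Submodule.smul_mem _ _ (hc j)
  rw [← add_sub_cancel (∑ j, r j • c j) u]
  refine Submodule.add_mem_sup ?_ ⟨M.sub_mem hu.1 sum_mem.1, ?_⟩
  · exact Submodule.sum_mem _ fun j _ =>
      Submodule.smul_mem _ _ (Submodule.subset_span (Set.mem_range_self j))
  · exact (Submodule.Quotient.eq W').mp π_sum.symm

theorem IsFlag.exists_lattice_basis {W : Fin (k + 1) → Submodule F U}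
    (hW : IsFlag W s) : ∃ b : Basis (Σ l, Fin (s l)) F U,
      Submodule.span V (Set.range b) = M ∧ ∀ l, W l = levelSpan b l := by
  choose c c_mem hc using fun l =>
    exists_lattice_layer_generators M (hW.succ_le l) (hW.finrank_castSucc l)
  let b : (Σ l, Fin (s l)) → U := fun v => c v.1 v.2
  have inf_le (l : Fin (k + 1)) : M ⊓ (W l).restrictScalars V ≤
      Submodule.span V (b '' {v | l ≤ v.1.castSucc}) := by
    induction l using Fin.reverseInduction with
    | last => simp [hW.last_eq_bot]
    | cast l ih =>
      refine (hc l).trans (sup_le (Submodule.span_mono ?_) (ih.trans (Submodule.span_mono ?_)))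
      · rintro _ ⟨j, rfl⟩
        exact ⟨⟨l, j⟩, le_refl l.castSucc, rfl⟩
      · exact Set.image_mono fun v hv => Fin.castSucc_lt_succ.le.trans hv
  have span_eq : Submodule.span V (Set.range b) = M := by
    refine le_antisymm (Submodule.span_le.mpr ?_) ?_
    · rintro _ ⟨v, rfl⟩
      exact (c_mem v.1 v.2).1
    · simpa [hW.zero_eq_top] using inf_le 0
  have top_le : ⊤ ≤ Submodule.span F (Set.range b) := by
    rw [← Submodule.span_span_of_tower V, span_eq, Submodule.IsLattice.span_eq_top]
  have card_eq : Fintype.card (Σ l, Fin (s l)) = finrank F U := by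
    simp [hW.sum_eq_finrank]
  refine ⟨basisOfTopLeSpanOfCardEqFinrank b top_le card_eq, ?_, fun l => le_antisymm ?_ ?_⟩
  · rwa [coe_basisOfTopLeSpanOfCardEqFinrank]
  · rw [levelSpan, coe_basisOfTopLeSpanOfCardEqFinrank, ← span_inf_restrictScalars M (W l),
      ← Submodule.span_span_of_tower V F (b '' _)]
    exact Submodule.span_mono (inf_le l)
  · rw [levelSpan_le_iff, coe_basisOfTopLeSpanOfCardEqFinrank]
    exact fun v hv => hW.antitone hv (c_mem v.1 v.2).2

end Lattice
end Flags

section Frames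

open Module MvPolynomial

theorem map_levelSpan_le_iff {k : ℕ} {s s' : Fin k → ℕ} {F U U' : Type*} [Field F]
    [AddCommGroup U] [Module F U] [AddCommGroup U'] [Module F U'] (f : U →ₗ[F] U')
    (b : Basis (Σ l, Fin (s l)) F U) (b' : Basis (Σ l, Fin (s' l)) F U') :
    (∀ l : Fin k, (levelSpan b l.castSucc).map f ≤ levelSpan b' l.succ) ↔
      ∀ v w, v.1 ≤ w.1 → LinearMap.toMatrix b b' f v w = 0 := by
  simp only [Submodule.map_le_iff_le_comap, levelSpan_le_iff, Submodule.mem_comap, mem_levelSpan,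
    LinearMap.toMatrix_apply, Fin.castSucc_le_castSucc_iff, Fin.castSucc_lt_succ_iff]
  exact ⟨fun h v w hvw => h w.1 w le_rfl v hvw, fun h l w hlw v hvl => h v w (hvl.trans hlw)⟩

theorem isLattice_span_basis {V F U ι : Type*} [CommRing V] [Field F] [Algebra V F]
    [AddCommGroup U] [Module V U] [Module F U] [IsScalarTower V F U] [Finite ι]
    (b : Basis ι F U) : Submodule.IsLattice F (Submodule.span V (Set.range b)) where
  fg := Submodule.fg_span (Set.finite_range b)
  span_eq_top := by rw [Submodule.span_span_of_tower, b.span_eq]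

theorem repr_mem_of_mem_span {F U ι : Type*} [Field F] [AddCommGroup U] [Module F U]
    {V : ValuationSubring F} (b : Basis ι F U) {u : U}
    (hu : u ∈ Submodule.span V (Set.range b)) (i : ι) : b.repr u i ∈ V := by
  obtain ⟨r, hr⟩ := (b.mem_span_iff_repr_mem V u).mp hu i
  exact hr ▸ r.2

theorem IsFlag.exists_integral_basis {k : ℕ} {s : Fin k → ℕ} {F U ι : Type*} [Field F]
    [AddCommGroup U] [Module F U] [Finite ι] (e : Basis ι F U) (V : ValuationSubring F)
    {W : Fin (k + 1) → Submodule F U} (hW : IsFlag W s) :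
    ∃ b : Basis (Σ l, Fin (s l)) F U, (∀ v j, e.repr (b v) j ∈ V) ∧ (∀ j v, b.repr (e j) v ∈ V) ∧
      ∀ l, W l = levelSpan b l := by
  have : Submodule.IsLattice F (Submodule.span V (Set.range e)) := isLattice_span_basis e
  obtain ⟨b, span_eq, hb⟩ := hW.exists_lattice_basis (Submodule.span V (Set.range e))
  refine ⟨b, fun v => repr_mem_of_mem_span e ?_, fun j => repr_mem_of_mem_span b ?_, hb⟩
  · rw [← span_eq]
    exact Submodule.subset_span (Set.mem_range_self v)
  · rw [span_eq]
    exact Submodule.subset_span (Set.mem_range_self j)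

theorem toMatrix_mul_mul_toMatrix {F m n ι κ : Type*} [Field F] [Fintype m] [Fintype n]
    [Finite κ] [Fintype ι] [DecidableEq ι] (A : Matrix m n F)
    (b : Basis ι F (n → F)) (b' : Basis κ F (m → F)) :
    b'.toMatrix (Pi.basisFun F m) * A * (Pi.basisFun F n).toMatrix b =
      LinearMap.toMatrix b b' A.mulVecLin := by
  classical
  have := Fintype.ofFinite κ
  rw [← basis_toMatrix_mul_linearMap_toMatrix_mul_basis_toMatrix b (Pi.basisFun F n) b'
    (Pi.basisFun F m), ← Matrix.toLin'_apply', ← Matrix.toLin_eq_toLin', LinearMap.toMatrix_toLin]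

namespace QuiverData

variable {Q : QuiverData} {d : Fin Q.n → ℕ} {L : ℕ}

section CommRing

variable (Q d)

/-- The matrix entries of a *frame*: at each vertex, a matrix whose columns are indexed by
`Σ l, Fin (S l i)`, the layers of a filtration governed by `S`, and a candidate inverse. -/
abbrev FrameCoords (S : Fin (L + 1) → Fin Q.n → ℕ) :=
  Σ i, (Fin (d i) × Σ l, Fin (S l i)) ⊕ ((Σ l, Fin (S l i)) × Fin (d i))

variable {Q d}
variable {S : Fin (L + 1) → Fin Q.n → ℕ} {R : Type*}

/-- The matrix by which the arrow `a` acts at the point `x`. -/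
def arrowMatrix (x : Coords Q d → R) (a : Fin Q.numArrows) :
    Matrix (Fin (d (Q.tgt a))) (Fin (d (Q.src a))) R :=
  .of fun j k => x ⟨a, (j, k)⟩

/-- The matrix whose columns are the frame vectors at the vertex `i`. -/
def frame (y : FrameCoords Q d S → R) (i : Fin Q.n) : Matrix (Fin (d i)) (Σ l, Fin (S l i)) R :=
  .of fun j v => y ⟨i, .inl (j, v)⟩

/-- The matrix prescribed as the inverse of `frame y i`. -/
def coframe (y : FrameCoords Q d S → R) (i : Fin Q.n) : Matrix (Σ l, Fin (S l i)) (Fin (d i)) R :=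
  .of fun v j => y ⟨i, .inr (v, j)⟩

/-- The frame `y` is a basis at each vertex, in which every arrow of `x` strictly lowers the
layers. -/
structure IsAdaptedFrame [CommRing R] (x : Coords Q d → R) (y : FrameCoords Q d S → R) : Prop where
  frame_mul_coframe (i : Fin Q.n) : frame y i * coframe y i = 1
  coframe_mul_frame (i : Fin Q.n) : coframe y i * frame y i = 1
  apply_eq_zero (a : Fin Q.numArrows) (v w) (h : v.1 ≤ w.1) :
    (coframe y (Q.tgt a) * arrowMatrix x a * frame y (Q.src a)) v w = 0

/-- The elements of `R` whose vanishing means that the frame `y` is adapted to `x`. -/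
def frameRelations [CommRing R] (x : Coords Q d → R) (y : FrameCoords Q d S → R) : Set R :=
  {p | ∃ (i : Fin Q.n) (j k : Fin (d i)),
    (frame y i * coframe y i - 1 : Matrix _ _ R) j k = p} ∪
  {p | ∃ (i : Fin Q.n) (v w : Σ l, Fin (S l i)),
    (coframe y i * frame y i - 1 : Matrix _ _ R) v w = p} ∪
  {p | ∃ (a : Fin Q.numArrows) (v : Σ l, Fin (S l (Q.tgt a))) (w : Σ l, Fin (S l (Q.src a))),
    v.1 ≤ w.1 ∧ (coframe y (Q.tgt a) * arrowMatrix x a * frame y (Q.src a)) v w = p}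

theorem isAdaptedFrame_comp_iff {R' : Type*} [CommRing R] [CommRing R'] (φ : R →+* R')
    {x : Coords Q d → R} {y : FrameCoords Q d S → R} :
    IsAdaptedFrame (φ ∘ x) (φ ∘ y) ↔ ∀ p ∈ frameRelations x y, φ p = 0 := by
  have map_frame_mul (i : Fin Q.n) : (frame y i * coframe y i - 1 : Matrix _ _ R).map φ =
      frame (φ ∘ y) i * coframe (φ ∘ y) i - 1 := by
    rw [Matrix.map_sub _ (map_sub φ), Matrix.map_mul, Matrix.map_one _ φ.map_zero φ.map_one]; rfl
  have map_coframe_mul (i : Fin Q.n) : (coframe y i * frame y i - 1 : Matrix _ _ R).map φ =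
      coframe (φ ∘ y) i * frame (φ ∘ y) i - 1 := by
    rw [Matrix.map_sub _ (map_sub φ), Matrix.map_mul, Matrix.map_one _ φ.map_zero φ.map_one]; rfl
  have map_arrow (a : Fin Q.numArrows) :
      (coframe y (Q.tgt a) * arrowMatrix x a * frame y (Q.src a)).map φ =
        coframe (φ ∘ y) (Q.tgt a) * arrowMatrix (φ ∘ x) a * frame (φ ∘ y) (Q.src a) := by
    rw [Matrix.map_mul, Matrix.map_mul]; rfl
  constructor
  · rintro h _ ((⟨i, j, k, rfl⟩ | ⟨i, v, w, rfl⟩) | ⟨a, v, w, hvw, rfl⟩)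
    · exact congr_fun₂ ((map_frame_mul i).trans (sub_eq_zero.mpr (h.frame_mul_coframe i))) j k
    · exact congr_fun₂ ((map_coframe_mul i).trans (sub_eq_zero.mpr (h.coframe_mul_frame i))) v w
    · exact (congr_fun₂ (map_arrow a) v w).trans (h.apply_eq_zero a v w hvw)
  · refine fun h => ⟨fun i => ?_, fun i => ?_, fun a v w hvw => ?_⟩
    · rw [← sub_eq_zero, ← map_frame_mul]
      exact Matrix.ext fun j k => h _ (.inl (.inl ⟨i, j, k, rfl⟩))
    · rw [← sub_eq_zero, ← map_coframe_mul]
      exact Matrix.ext fun v w => h _ (.inl (.inr ⟨i, v, w, rfl⟩))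
    · rw [← map_arrow]
      exact h _ (.inr ⟨a, v, w, hvw, rfl⟩)

/-- The ideal of the variety of pairs of a representation and a frame adapted to it. -/
noncomputable def frameIdeal (S : Fin (L + 1) → Fin Q.n → ℕ) (K : Type*) [Field K] :
    Ideal (MvPolynomial (Coords Q d ⊕ FrameCoords Q d S) K) :=
  .span (frameRelations (X ∘ Sum.inl) (X ∘ Sum.inr))

theorem mem_zeroLocus_frameIdeal {K F : Type*} [Field K] [Field F] [Algebra K F]
    {z : Coords Q d ⊕ FrameCoords Q d S → F} :
    z ∈ zeroLocus F (frameIdeal S K) ↔ IsAdaptedFrame (z ∘ Sum.inl) (z ∘ Sum.inr) := by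
  have z_eq : (aeval z : MvPolynomial _ K →ₐ[K] F) ∘ X = z := funext (aeval_X z)
  rw [frameIdeal, zeroLocus_span]
  conv_rhs => rw [← z_eq]
  exact (isAdaptedFrame_comp_iff (aeval z : MvPolynomial _ K →ₐ[K] F).toRingHom).symm

end CommRing

variable {F : Type*} [Field F] {S : Fin (L + 1) → Fin Q.n → ℕ} {x : Coords Q d → F}

/-- Flags at the vertices whose layers have the dimensions prescribed by `S`, and which every
arrow of `x` strictly lowers. -/
def HasStrictFlags (x : Coords Q d → F) (S : Fin (L + 1) → Fin Q.n → ℕ) : Prop :=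
  ∃ W : ∀ i, Fin (L + 2) → Submodule F (Fin (d i) → F), (∀ i, IsFlag (W i) fun l => S l i) ∧
    ∀ a (l : Fin (L + 1)),
      (W (Q.src a) l.castSucc).map (arrowMatrix x a).mulVecLin ≤ W (Q.tgt a) l.succ

theorem HasStrictFlags.exists_isAdaptedFrame (h : HasStrictFlags x S) (V : ValuationSubring F) :
    ∃ y : FrameCoords Q d S → F, IsAdaptedFrame x y ∧ ∀ c, y c ∈ V := by
  obtain ⟨W, hW, strict⟩ := h
  choose b frame_mem coframe_mem W_eq using fun i =>
    (hW i).exists_integral_basis (Pi.basisFun F (Fin (d i))) V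
  simp only [W_eq] at strict
  let y : FrameCoords Q d S → F := fun c => c.2.elim
    (fun p => (Pi.basisFun F _).toMatrix (b c.1) p.1 p.2)
    (fun p => (b c.1).toMatrix (Pi.basisFun F _) p.1 p.2)
  have frame_eq (i) : frame y i = (Pi.basisFun F _).toMatrix (b i) := rfl
  have coframe_eq (i) : coframe y i = (b i).toMatrix (Pi.basisFun F _) := rfl
  refine ⟨y, ⟨fun i => ?_, fun i => ?_, fun a v w hvw => ?_⟩, ?_⟩
  · rw [frame_eq, coframe_eq, Basis.toMatrix_mul_toMatrix_flip]
  · rw [frame_eq, coframe_eq, Basis.toMatrix_mul_toMatrix_flip]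
  · rw [frame_eq, coframe_eq, toMatrix_mul_mul_toMatrix]
    exact (map_levelSpan_le_iff _ _ _).mp (strict a) v w hvw
  · rintro ⟨i, p | p⟩
    · exact frame_mem i p.2 p.1
    · exact coframe_mem i p.2 p.1

theorem IsAdaptedFrame.hasStrictFlags {y : FrameCoords Q d S → F} (h : IsAdaptedFrame x y) :
    HasStrictFlags x S := by
  let b (i : Fin Q.n) : Basis (Σ l, Fin (S l i)) F (Fin (d i) → F) :=
    .ofEquivFun (Matrix.toLin'OfInv (h.frame_mul_coframe i) (h.coframe_mul_frame i))
  have frame_eq (i : Fin Q.n) : frame y i = (Pi.basisFun F _).toMatrix (b i) := by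
    ext j v
    simp [b, Basis.toMatrix_apply]
  have coframe_eq (i : Fin Q.n) : coframe y i = (b i).toMatrix (Pi.basisFun F _) := by
    ext v j
    simp [b, Basis.toMatrix_apply]
  refine ⟨fun i => levelSpan (b i), fun i => isFlag_levelSpan (b i), fun a => ?_⟩
  refine (map_levelSpan_le_iff _ _ _).mpr fun v w hvw => ?_
  rw [← toMatrix_mul_mul_toMatrix, ← frame_eq, ← coframe_eq]
  exact h.apply_eq_zero a v w hvw

variable {K : Type} [Field K] [IsAlgClosed K]

theorem isClosed_setOf_hasStrictFlags (S : Fin (L + 1) → Fin Q.n → ℕ) :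
    IsClosed {x : RepSpace Q d K | HasStrictFlags x S} := by
  have eq_image : {x : RepSpace Q d K | HasStrictFlags x S} =
      (· ∘ Sum.inl) '' zeroLocus K (frameIdeal S K) := by
    ext x
    constructor
    · intro h
      obtain ⟨y, hy, -⟩ := h.exists_isAdaptedFrame ⊤
      exact ⟨Sum.elim x y, mem_zeroLocus_frameIdeal.mpr hy, rfl⟩
    · rintro ⟨z, hz, rfl⟩
      exact (mem_zeroLocus_frameIdeal.mp hz).hasStrictFlags
  rw [eq_image]
  refine isClosed_image_comp_inl_zeroLocus _ fun F _ _ V _ z hz hzV => ?_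
  obtain ⟨y, hy, hyV⟩ := (mem_zeroLocus_frameIdeal.mp hz).hasStrictFlags.exists_isAdaptedFrame V
  exact ⟨Sum.elim (z ∘ Sum.inl) y, mem_zeroLocus_frameIdeal.mpr hy, rfl, Sum.rec hzV hyV⟩

end QuiverData
end Frames

section Filtrations

open Module

namespace QuiverData

variable {Q : QuiverData} {d : Fin Q.n → ℕ} {K : Type} [Field K]

/-- The component of a vector of the carrier space at the vertex `i`. -/
def vertexComponent (i : Fin Q.n) : Carrier Q d K →ₗ[K] Fin (d i) → K :=
  LinearMap.proj i ∘ₗ (LinearEquiv.piCurry K fun _ _ => K).toLinearMap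

/-- The inclusion of the space at the vertex `i` into the carrier space. -/
def vertexInclusion (i : Fin Q.n) : (Fin (d i) → K) →ₗ[K] Carrier Q d K :=
  (LinearEquiv.piCurry K fun _ _ => K).symm.toLinearMap ∘ₗ
    LinearMap.single K (fun i => Fin (d i) → K) i

theorem carrier_ext {m m' : Carrier Q d K} (h : ∀ i, vertexComponent i m = vertexComponent i m') :
    m = m' :=
  funext fun jv => congr_fun (h jv.1) jv.2

theorem vertexComponent_vertexInclusion (i : Fin Q.n) (u : Fin (d i) → K) :
    vertexComponent i (vertexInclusion i u) = u := by
  simp [vertexComponent, vertexInclusion]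

theorem vertexComponent_vertexInclusion_of_ne {i j : Fin Q.n} (h : j ≠ i) (u : Fin (d i) → K) :
    vertexComponent j (vertexInclusion i u) = 0 := by
  simp [vertexComponent, vertexInclusion, h]

theorem vertexInclusion_injective (i : Fin Q.n) :
    Function.Injective (vertexInclusion i : (Fin (d i) → K) →ₗ[K] Carrier Q d K) :=
  Function.LeftInverse.injective (vertexComponent_vertexInclusion i)

theorem range_vertexComponent (i : Fin Q.n) :
    LinearMap.range (vertexComponent i : Carrier Q d K →ₗ[K] _) = ⊤ :=
  LinearMap.range_eq_top.mpr fun u => ⟨_, vertexComponent_vertexInclusion i u⟩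

theorem proj_eq_vertexInclusion_comp (i : Fin Q.n) :
    proj Q d K i = vertexInclusion i ∘ₗ vertexComponent i := by
  refine LinearMap.ext fun m => carrier_ext fun j => ?_
  rw [LinearMap.comp_apply]
  obtain rfl | hji := eq_or_ne j i
  · rw [vertexComponent_vertexInclusion]
    exact funext fun _ => if_pos rfl
  · rw [vertexComponent_vertexInclusion_of_ne hji]
    exact funext fun _ => if_neg hji

theorem arrowMap_eq_vertexInclusion_comp (x : RepSpace Q d K) (a : Fin Q.numArrows) :
    arrowMap Q d K x a = vertexInclusion (Q.tgt a) ∘ₗ (arrowMatrix x a).mulVecLin ∘ₗ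
      vertexComponent (Q.src a) := by
  refine LinearMap.ext fun m => carrier_ext fun j => ?_
  rw [LinearMap.comp_apply]
  obtain rfl | hj := eq_or_ne j (Q.tgt a)
  · rw [vertexComponent_vertexInclusion]
    exact funext fun _ => dif_pos rfl
  · rw [vertexComponent_vertexInclusion_of_ne hj]
    exact funext fun _ => dif_neg hj

theorem vdim_eq_finrank_map_vertexComponent (N : Submodule K (Carrier Q d K)) (i : Fin Q.n) :
    vdim Q d K N i = finrank K (N.map (vertexComponent i)) := by
  rw [vdim, proj_eq_vertexInclusion_comp, Submodule.map_comp]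
  exact (Submodule.equivMapOfInjective _ (vertexInclusion_injective i) _).finrank_eq.symm

theorem vdim_top (i : Fin Q.n) : vdim Q d K ⊤ i = d i := by
  rw [vdim_eq_finrank_map_vertexComponent, Submodule.map_top, range_vertexComponent, finrank_top,
    finrank_fin_fun]

theorem eq_bot_of_vdim_eq_zero {N : Submodule K (Carrier Q d K)} (h : ∀ i, vdim Q d K N i = 0) :
    N = ⊥ := by
  refine (Submodule.eq_bot_iff N).mpr fun m hm => carrier_ext fun i => ?_
  have map_eq_bot : N.map (vertexComponent i) = ⊥ := by
    rw [← Submodule.finrank_eq_zero, ← vdim_eq_finrank_map_vertexComponent, h]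
  rw [map_zero, ← Submodule.mem_bot K, ← map_eq_bot]
  exact Submodule.mem_map_of_mem hm

variable {L : ℕ} {S : Fin (L + 1) → Fin Q.n → ℕ} {x : RepSpace Q d K}

theorem hasStrictFlags_of_mem_filtSet (h : x ∈ FiltSet Q d K L S) : HasStrictFlags x S := by
  obtain ⟨N, zero_eq_top, last_eq_bot, succ_le, -, arrow_le, vdim_eq⟩ := h
  refine ⟨fun i l => (N l).map (vertexComponent i), fun i => ⟨?_, ?_, fun l => ?_, fun l => ?_⟩,
    fun a l => ?_⟩
  · exact (congr_arg _ zero_eq_top).trans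
      ((Submodule.map_top _).trans (range_vertexComponent i))
  · exact (congr_arg _ last_eq_bot).trans (Submodule.map_bot _)
  · exact Submodule.map_mono (succ_le l)
  · simpa only [vdim_eq_finrank_map_vertexComponent] using vdim_eq l i
  · rintro _ ⟨_, ⟨m, hm, rfl⟩, rfl⟩
    refine ⟨arrowMap Q d K x a m, arrow_le l a (Submodule.mem_map_of_mem hm), ?_⟩
    rw [arrowMap_eq_vertexInclusion_comp]
    exact vertexComponent_vertexInclusion _ _

/-- The graded subspace of the carrier space with prescribed components at the vertices. -/
def ofComponents (W : ∀ i, Submodule K (Fin (d i) → K)) : Submodule K (Carrier Q d K) :=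
  ⨅ i, (W i).comap (vertexComponent i)

theorem mem_ofComponents {W : ∀ i, Submodule K (Fin (d i) → K)} {m : Carrier Q d K} :
    m ∈ ofComponents W ↔ ∀ i, vertexComponent i m ∈ W i := by
  simp only [ofComponents, Submodule.mem_iInf, Submodule.mem_comap]

theorem vertexInclusion_mem_ofComponents {W : ∀ i, Submodule K (Fin (d i) → K)} {i : Fin Q.n}
    {u : Fin (d i) → K} : vertexInclusion i u ∈ ofComponents W ↔ u ∈ W i := by
  refine mem_ofComponents.trans ⟨fun h => ?_, fun h j => ?_⟩
  · simpa only [vertexComponent_vertexInclusion] using h i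
  · obtain rfl | hji := eq_or_ne j i
    · rwa [vertexComponent_vertexInclusion]
    · rw [vertexComponent_vertexInclusion_of_ne hji]
      exact zero_mem _

theorem map_vertexComponent_ofComponents (W : ∀ i, Submodule K (Fin (d i) → K)) (i : Fin Q.n) :
    (ofComponents W).map (vertexComponent i) = W i := by
  refine le_antisymm (Submodule.map_le_iff_le_comap.mpr (iInf_le _ i)) fun u hu => ?_
  exact ⟨_, vertexInclusion_mem_ofComponents.mpr hu, vertexComponent_vertexInclusion i u⟩

theorem HasStrictFlags.mem_filtSet (h : HasStrictFlags x S) : x ∈ FiltSet Q d K L S := by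
  obtain ⟨W, hW, strict⟩ := h
  refine ⟨fun l => ofComponents (W · l), ?_, ?_, fun l m hm => ?_, fun l i => ?_, fun l a => ?_,
    fun l i => ?_⟩
  · exact (Submodule.eq_top_iff'.mpr fun m => mem_ofComponents.mpr fun i =>
      (hW i).zero_eq_top ▸ Submodule.mem_top)
  · refine (Submodule.eq_bot_iff _).mpr fun m hm => carrier_ext fun i => ?_
    rw [map_zero, ← Submodule.mem_bot K, ← (hW i).last_eq_bot]
    exact mem_ofComponents.mp hm i
  · exact mem_ofComponents.mpr fun i => (hW i).succ_le l (mem_ofComponents.mp hm i)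
  · rintro _ ⟨m, hm, rfl⟩
    rw [proj_eq_vertexInclusion_comp]
    exact vertexInclusion_mem_ofComponents.mpr (mem_ofComponents.mp hm i)
  · rintro _ ⟨m, hm, rfl⟩
    rw [arrowMap_eq_vertexInclusion_comp]
    exact vertexInclusion_mem_ofComponents.mpr
      (strict a l (Submodule.mem_map_of_mem (mem_ofComponents.mp hm _)))
  · have vdim_ofComponents (l : Fin (L + 2)) :
        vdim Q d K (ofComponents (W · l)) i = finrank K (W i l) := by
      rw [vdim_eq_finrank_map_vertexComponent, map_vertexComponent_ofComponents]
    rw [vdim_ofComponents, vdim_ofComponents]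
    exact (hW i).finrank_castSucc l

theorem mem_filtSet_iff_hasStrictFlags : x ∈ FiltSet Q d K L S ↔ HasStrictFlags x S :=
  ⟨hasStrictFlags_of_mem_filtSet, HasStrictFlags.mem_filtSet⟩

theorem isClosed_filtSet [IsAlgClosed K] (S : Fin (L + 1) → Fin Q.n → ℕ) :
    IsClosed (FiltSet Q d K L S) := by
  rw [show FiltSet Q d K L S = {x | HasStrictFlags x S} from
    Set.ext fun _ => mem_filtSet_iff_hasStrictFlags]
  exact isClosed_setOf_hasStrictFlags S

theorem hasDimVec_of_mem_filtSet (h : x ∈ FiltSet Q d K L S) : hasDimVec S d := by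
  obtain ⟨W, hW, -⟩ := hasStrictFlags_of_mem_filtSet h
  exact fun i => (hW i).sum_eq_finrank.trans (finrank_fin_fun K)

end QuiverData
end Filtrations

section RadicalLayering

namespace QuiverData

variable {Q : QuiverData} {d : Fin Q.n → ℕ} {K : Type} [Field K]

theorem radPow_zero (x : RepSpace Q d K) : radPow Q d K x 0 = ⊤ :=
  top_unique <| le_iSup_of_le ⟨[], rfl⟩ <| LinearMap.range_id.ge

theorem radPow_succ (x : RepSpace Q d K) (l : ℕ) :
    radPow Q d K x (l + 1) = ⨆ a, (radPow Q d K x l).map (arrowMap Q d K x a) := by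
  have range_cons (a : Fin Q.numArrows) (w : List (Fin Q.numArrows)) :
      LinearMap.range (wordMap Q d K x (a :: w)) =
        (LinearMap.range (wordMap Q d K x w)).map (arrowMap Q d K x a) := by
    rw [← LinearMap.range_comp]
    rfl
  refine le_antisymm (iSup_le ?_) (iSup_le fun a => ?_)
  · rintro ⟨_ | ⟨a, w⟩, hw⟩
    · cases hw
    · rw [range_cons]
      exact le_iSup_of_le a <| Submodule.map_mono <|
        le_iSup_of_le ⟨w, Nat.succ_injective hw⟩ le_rfl
  · rw [radPow, Submodule.map_iSup]
    refine iSup_le fun w => ?_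
    rw [← range_cons]
    exact le_iSup_of_le ⟨a :: w, congr_arg Nat.succ w.2⟩ le_rfl

theorem map_arrowMap_radPow_le (x : RepSpace Q d K) (l : ℕ) (a : Fin Q.numArrows) :
    (radPow Q d K x l).map (arrowMap Q d K x a) ≤ radPow Q d K x (l + 1) :=
  (le_iSup_of_le a le_rfl).trans (radPow_succ x l).ge

theorem radPow_succ_le (x : RepSpace Q d K) (l : ℕ) :
    radPow Q d K x (l + 1) ≤ radPow Q d K x l := by
  induction l with
  | zero => exact (radPow_zero x).symm ▸ le_top
  | succ l ih =>
    rw [radPow_succ x (l + 1)]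
    exact (iSup_mono fun a => Submodule.map_mono ih).trans (radPow_succ x l).ge

theorem map_proj_map_arrowMap_le (x : RepSpace Q d K) (a : Fin Q.numArrows) (i : Fin Q.n)
    (N : Submodule K (Carrier Q d K)) :
    (N.map (arrowMap Q d K x a)).map (proj Q d K i) ≤ N.map (arrowMap Q d K x a) := by
  rintro _ ⟨_, ⟨m, hm, rfl⟩, rfl⟩
  rw [proj_eq_vertexInclusion_comp, arrowMap_eq_vertexInclusion_comp]
  simp only [LinearMap.comp_apply]
  obtain rfl | hi := eq_or_ne i (Q.tgt a)
  · rw [vertexComponent_vertexInclusion]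
    exact ⟨m, hm, rfl⟩
  · rw [vertexComponent_vertexInclusion_of_ne hi, map_zero]
    exact zero_mem _

theorem map_proj_radPow_le (x : RepSpace Q d K) (l : ℕ) (i : Fin Q.n) :
    (radPow Q d K x l).map (proj Q d K i) ≤ radPow Q d K x l := by
  cases l with
  | zero => exact (radPow_zero x).symm ▸ le_top
  | succ l =>
    rw [radPow_succ, Submodule.map_iSup]
    exact iSup_mono fun a => map_proj_map_arrowMap_le x a i _

theorem vdim_radPow_castSucc {L : ℕ} (x : RepSpace Q d K) (l : Fin (L + 1)) (i : Fin Q.n) :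
    vdim Q d K (radPow Q d K x l.castSucc) i =
      radLayering Q d K L x l i + vdim Q d K (radPow Q d K x l.succ) i :=
  (Nat.sub_add_cancel (Submodule.finrank_mono (Submodule.map_mono (radPow_succ_le x l)))).symm

theorem radPow_eq_bot_of_hasDimVec {L : ℕ} {x : RepSpace Q d K}
    (h : hasDimVec (radLayering Q d K L x) d) : radPow Q d K x (L + 1) = ⊥ := by
  refine eq_bot_of_vdim_eq_zero fun i => ?_
  have telescope := apply_zero_eq_sum_add_apply_last
    (f := fun l : Fin (L + 2) => vdim Q d K (radPow Q d K x l) i) (vdim_radPow_castSucc x · i)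
  rw [h i, Fin.val_zero, radPow_zero, vdim_top] at telescope
  exact Nat.left_eq_add.mp telescope

theorem mem_filtSet_radLayering {L : ℕ} {x : RepSpace Q d K}
    (h : hasDimVec (radLayering Q d K L x) d) : x ∈ FiltSet Q d K L (radLayering Q d K L x) :=
  ⟨fun l => radPow Q d K x l, radPow_zero x, radPow_eq_bot_of_hasDimVec h,
    fun l => radPow_succ_le x l, fun l => map_proj_radPow_le x l,
    fun l => map_arrowMap_radPow_le x l, vdim_radPow_castSucc x⟩

end QuiverData
end RadicalLayering

section UpperSemicontinuity

theorem isClosed_setOf_le_ncard {X σ : Type*} [TopologicalSpace X] {Z : σ → Set X}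
    (hZ : ∀ s, IsClosed (Z s)) (hfin : {s | (Z s).Nonempty}.Finite) (m : ℕ) :
    IsClosed {x | m ≤ {s | x ∈ Z s}.ncard} := by
  have eq_biUnion : {x | m ≤ {s | x ∈ Z s}.ncard} =
      ⋃ T ∈ {T : Set σ | T ⊆ {s | (Z s).Nonempty} ∧ m ≤ T.ncard}, ⋂ s ∈ T, Z s := by
    ext x
    have subset : {s | x ∈ Z s} ⊆ {s | (Z s).Nonempty} := fun s hs => ⟨x, hs⟩
    simp only [Set.mem_iUnion, Set.mem_iInter, exists_prop]
    exact ⟨fun hx => ⟨_, ⟨subset, hx⟩, fun s hs => hs⟩, fun ⟨T, hT, hxT⟩ =>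
      hT.2.trans (Set.ncard_le_ncard hxT (hfin.subset subset))⟩
  rw [eq_biUnion]
  exact (hfin.finite_subsets.subset fun T hT => hT.1).isClosed_biUnion fun T _ =>
    isClosed_biInter fun s _ => hZ s

theorem finite_setOf_hasDimVec {n L : ℕ} (d : Fin n → ℕ) :
    {S : Fin (L + 1) → Fin n → ℕ | hasDimVec S d}.Finite :=
  (Set.finite_Iic fun _ => d).subset fun S hS l i =>
    (single_le_sum (f := (S · i)) (fun _ _ => Nat.zero_le _) (mem_univ l)).trans_eq (hS i)

open QuiverData in
theorem statement_18_general (K : Type) [Field K] [IsAlgClosed K]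
    (Q : QuiverData) (L : ℕ) (d : Fin Q.n → ℕ) (P : Set (RepSpace Q d K))
    (S : Fin (L + 1) → Fin Q.n → ℕ) (hS : hasDimVec S d) :
    IsClosed {x : P | x.1 ∈ FiltSet Q d K L S} ∧
    closure {x : P | radLayering Q d K L x.1 = S} ⊆ {x : P | x.1 ∈ FiltSet Q d K L S} ∧
    ∀ m : ℕ, IsClosed {x : P | m ≤ gammaCount Q d K L P x.1} := by
  have isClosed (S : Fin (L + 1) → Fin Q.n → ℕ) : IsClosed {x : P | x.1 ∈ FiltSet Q d K L S} :=
    (isClosed_filtSet S).preimage continuous_subtype_val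
  refine ⟨isClosed S, closure_minimal ?_ (isClosed S), ?_⟩
  · rintro x rfl
    exact mem_filtSet_radLayering hS
  · refine isClosed_setOf_le_ncard (fun S => isClosed_const.inter (isClosed S))
      ((finite_setOf_hasDimVec d).subset ?_)
    rintro S ⟨x, -, hx⟩
    exact hasDimVec_of_mem_filtSet hx

end UpperSemicontinuity

open QuiverData in
/-- For an arbitrary basic finite-dimensional algebra `Λ = KQ/I` (with
`J^{L+1} = 0`) and any `d`-dimensional semisimple sequence `S` (realizable or not), the
set `Filt S` is Zariski-closed in `Rep_d(Λ)`; in particular the closure of `Rep S` is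
contained in `Filt S`. Consequently `x ↦ Γ(M_x)` is upper semicontinuous. -/
theorem statement_18 (K : Type) [Field K] [IsAlgClosed K]
    (Q : QuiverData) (L : ℕ) (d : Fin Q.n → ℕ)
    (Rels : Set (FreeAlgebra K (Fin Q.n ⊕ Fin Q.numArrows)))
    (hLoewy : ∀ x ∈ RepVar Q d K Rels, ∀ w : List (Fin Q.numArrows),
      w.length = L + 1 → wordMap Q d K x w = 0)
    (S : Fin (L+1) → Fin Q.n → ℕ) (hS : hasDimVec S d) :
    IsClosed {x : GenV Q d K Rels | x.1 ∈ FiltSet Q d K L S} ∧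
    closure {x : GenV Q d K Rels | radLayering Q d K L x.1 = S}
      ⊆ {x : GenV Q d K Rels | x.1 ∈ FiltSet Q d K L S} ∧
    ∀ m : ℕ, IsClosed {x : GenV Q d K Rels |
        m ≤ gammaCount Q d K L (RepVar Q d K Rels) x.1} :=
  statement_18_general K Q L d (RepVar Q d K Rels) S hS
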